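/- arXiv:1010.4750 — 2 statements merged into one kernel-verified Lean document; each statement's English description precedes it below -/
import Mathlib

section
/- Let r ≥ 2 and let ξ ∈ ℂ be a primitive r-th root of unity. Suppose y, z ∈ ℚ(ξ) with z ≠ 0. If y^s·z ∈ ℤ[ξ] for infinitely many positive integers s, then y ∈ ℤ[ξ]. -/
noncomputable section

/-!
A relation `a * y ^ s ∈ A` for one large `s` makes every `a * y ^ n` with `n ≤ s` integral, because
`(a * y ^ n) ^ s = a ^ (s - n) * (a * y ^ s) ^ n`. If `A` is integrally closed and there are
infinitely many such `s`, then `a * y ^ n ∈ A` for all `n`: the element `y` is almost integral,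
hence integral when `A` is Noetherian. This applies to `ℤ[ξ]`, the ring of integers of `ℚ(ξ)`.
-/

open NumberField IntermediateField
open scoped nonZeroDivisors

section AlmostIntegral

variable {A B : Type*} [CommRing A] [CommRing B] [Algebra A B]

theorem isIntegral_smul_pow_of_le {a : A} {y : B} {n s : ℕ} (hns : n ≤ s)
    (hs : IsIntegral A (a • y ^ s)) : IsIntegral A (a • y ^ n) := by
  obtain rfl | hn := n.eq_zero_or_pos
  · simpa only [pow_zero, Algebra.smul_def, mul_one] using isIntegral_algebraMap
  · have pow_eq : (a • y ^ n) ^ s = a ^ (s - n) • (a • y ^ s) ^ n := by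
      rw [smul_pow, smul_pow, smul_smul, ← pow_add, Nat.sub_add_cancel hns, pow_right_comm]
    refine .of_pow (hn.trans_le hns) ?_
    rw [pow_eq]
    exact (hs.pow n).smul _

theorem isAlmostIntegral_of_infinite_smul_pow_mem_range [IsIntegrallyClosedIn A B] {a : A} {y : B}
    (ha : a ∈ A⁰) (h : {s : ℕ | a • y ^ s ∈ (algebraMap A B).range}.Infinite) :
    IsAlmostIntegral A y := by
  refine ⟨a, ha, fun n ↦ ?_⟩
  obtain ⟨s, ⟨b, hb⟩, hns⟩ := h.exists_gt n
  have hs : IsIntegral A (a • y ^ s) := hb ▸ isIntegral_algebraMap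
  exact IsIntegrallyClosedIn.isIntegral_iff.mp (isIntegral_smul_pow_of_le hns.le hs)

end AlmostIntegral

theorem mem_range_algebraMap_of_infinite_pow_mul_mem_range {A K : Type*} [CommRing A]
    [IsNoetherianRing A] [IsIntegrallyClosed A] [Field K] [Algebra A K] [IsFractionRing A K]
    {y z : K} (hz : z ≠ 0) (h : {s : ℕ | y ^ s * z ∈ (algebraMap A K).range}.Infinite) :
    y ∈ (algebraMap A K).range := by
  have : IsDomain A := IsDomain.of_faithfulSMul A K
  obtain ⟨p, q, -, rfl⟩ := IsFractionRing.div_surjective (A := A) z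
  obtain ⟨hp, hq'⟩ := div_ne_zero_iff.mp hz
  have p_mem : p ∈ A⁰ := mem_nonZeroDivisors_of_ne_zero fun hp₀ ↦ hp (by rw [hp₀, map_zero])
  have clear_denom (s : ℕ) :
      p • y ^ s = y ^ s * (algebraMap A K p / algebraMap A K q) * algebraMap A K q := by
    rw [mul_assoc, div_mul_cancel₀ _ hq', Algebra.smul_def, mul_comm]
  have almostIntegral : IsAlmostIntegral A y :=
    isAlmostIntegral_of_infinite_smul_pow_mem_range p_mem <| h.mono fun s hs ↦ by
      rw [Set.mem_ofPred_eq, clear_denom]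
      exact mul_mem hs ⟨q, rfl⟩
  exact IsIntegrallyClosed.isIntegral_iff.mp almostIntegral.isIntegral

theorem isIntegral_of_infinite_isIntegral_pow_mul {K : Type*} [Field K] [NumberField K] {y z : K}
    (hz : z ≠ 0) (h : {s : ℕ | IsIntegral ℤ (y ^ s * z)}.Infinite) : IsIntegral ℤ y :=
  (IsIntegralClosure.isIntegral_iff (A := 𝓞 K)).mpr <|
    mem_range_algebraMap_of_infinite_pow_mul_mem_range hz <|
      h.mono fun _ hs ↦ IsIntegralClosure.isIntegral_iff.mp hs

theorem mem_subringClosure_singleton_iff_isIntegral {K : Type*} [Field K] [CharZero K] {r : ℕ}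
    [NeZero r] [IsCyclotomicExtension {r} ℚ K] {ζ x : K} (hζ : IsPrimitiveRoot ζ r) :
    x ∈ Subring.closure {ζ} ↔ IsIntegral ℤ x := by
  have := IsCyclotomicExtension.Rat.isIntegralClosure_adjoin_singleton hζ
  rw [IsIntegralClosure.isIntegral_iff (A := Algebra.adjoin ℤ {ζ}), ← mem_subalgebraOfSubring,
    ← Algebra.adjoin_int]
  exact ⟨fun hx ↦ ⟨⟨x, hx⟩, rfl⟩, by rintro ⟨w, rfl⟩; exact w.2⟩

theorem map_mem_subringClosure_image_iff {R S : Type*} [Ring R] [Ring S] {f : R →+* S}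
    (hf : Function.Injective f) {t : Set R} {x : R} :
    f x ∈ Subring.closure (f '' t) ↔ x ∈ Subring.closure t := by
  rw [← RingHom.map_closure]
  exact hf.mem_set_image

theorem isCyclotomicExtension_adjoin_simple {F L : Type*} [Field F] [Field L] [Algebra F L] {r : ℕ}
    [NeZero r] {ξ : L} (hξ : IsPrimitiveRoot ξ r) : IsCyclotomicExtension {r} F F⟮ξ⟯ := by
  have ξ_algebraic : IsAlgebraic F ξ := (hξ.isIntegral (NeZero.pos r)).tower_top.isAlgebraic
  change IsCyclotomicExtension {r} F F⟮ξ⟯.toSubalgebra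
  rw [adjoin_simple_toSubalgebra_of_isAlgebraic ξ_algebraic]
  exact hξ.adjoin_isCyclotomicExtension F

theorem coe_mem_subringClosure_singleton_iff_isIntegral {L : Type*} [Field L] [CharZero L] {r : ℕ}
    [NeZero r] {ξ : L} (hξ : IsPrimitiveRoot ξ r) (x : ℚ⟮ξ⟯) :
    (x : L) ∈ Subring.closure {ξ} ↔ IsIntegral ℤ x := by
  have : IsCyclotomicExtension {r} ℚ ℚ⟮ξ⟯ := isCyclotomicExtension_adjoin_simple hξ
  have algebraMap_injective : Function.Injective (algebraMap ℚ⟮ξ⟯ L) :=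
    (algebraMap ℚ⟮ξ⟯ L).injective
  have gen_primitive : IsPrimitiveRoot (AdjoinSimple.gen ℚ ξ) r :=
    .of_map_of_injective (f := algebraMap ℚ⟮ξ⟯ L) (by rwa [AdjoinSimple.algebraMap_gen])
      algebraMap_injective
  rw [← mem_subringClosure_singleton_iff_isIntegral gen_primitive,
    ← map_mem_subringClosure_image_iff algebraMap_injective, Set.image_singleton,
    AdjoinSimple.algebraMap_gen, IntermediateField.algebraMap_apply]

theorem stmt_10_general {L : Type*} [Field L] [CharZero L] {r : ℕ} [NeZero r] {ξ : L}
    (hξ : IsPrimitiveRoot ξ r) {y z : L} (hy : y ∈ Subfield.closure {ξ})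
    (hzmem : z ∈ Subfield.closure {ξ}) (hz : z ≠ 0)
    (h : {s : ℕ | y ^ s * z ∈ Subring.closure {ξ}}.Infinite) : y ∈ Subring.closure {ξ} := by
  have : IsCyclotomicExtension {r} ℚ ℚ⟮ξ⟯ := isCyclotomicExtension_adjoin_simple hξ
  have : NumberField ℚ⟮ξ⟯ := IsCyclotomicExtension.numberField {r} ℚ ℚ⟮ξ⟯
  have closure_le : Subfield.closure {ξ} ≤ ℚ⟮ξ⟯.toSubfield :=
    Subfield.closure_le.mpr (Set.singleton_subset_iff.mpr (mem_adjoin_simple_self ℚ ξ))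
  lift y to ℚ⟮ξ⟯ using closure_le hy
  lift z to ℚ⟮ξ⟯ using closure_le hzmem
  have infinite_isIntegral : {s : ℕ | IsIntegral ℤ (y ^ s * z)}.Infinite :=
    h.mono fun s hs ↦ (coe_mem_subringClosure_singleton_iff_isIntegral hξ (y ^ s * z)).mp hs
  rw [coe_mem_subringClosure_singleton_iff_isIntegral hξ]
  exact isIntegral_of_infinite_isIntegral_pow_mul (mod_cast hz) infinite_isIntegral

/-- Let `ξ` be a primitive `r`-th root of unity, `y, z ∈ ℚ(ξ)` with `z ≠ 0`.
If `y^s z ∈ ℤ[ξ]` for infinitely many positive integers `s`, then `y ∈ ℤ[ξ]`. -/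
theorem stmt_10 (r : ℕ) (hr : 2 ≤ r) (ξ : ℂ) (hξ : IsPrimitiveRoot ξ r)
    (y z : ℂ) (hy : y ∈ Subfield.closure ({ξ} : Set ℂ))
    (hzmem : z ∈ Subfield.closure ({ξ} : Set ℂ)) (hz : z ≠ 0)
    (h : {s : ℕ | 0 < s ∧ y ^ s * z ∈ Subring.closure ({ξ} : Set ℂ)}.Infinite) :
    y ∈ Subring.closure ({ξ} : Set ℂ) :=
  have : NeZero r := ⟨by lia⟩
  stmt_10_general hξ hy hzmem hz (h.mono fun _ hs ↦ hs.2)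
end
end

section
/- Let r ≥ 2, let ξ ∈ ℂ be a primitive r-th root of unity, and let b be an integer coprime to r. Then: G(b,0,ξ)² is associated in ℤ[ξ] to r if r is odd; G(b,0,ξ)² = 0 if r ≡ 2 (mod 4); G(b,0,ξ)² is associated in ℤ[ξ] to 2r if r ≡ 0 (mod 4). Furthermore, if r ≡ 2 (mod 4), then G(b,b,ξ)² is associated in ℤ[ξ] to 2r. -/
noncomputable section

/-- The quadratic Gauss sum `G(b,d,η) = Σ_{n=0}^{s-1} η^{bn²+dn}` for a root of unity `η`
of order `s`. -/
def GaussSum (s : ℕ) (b d : ℤ) (η : ℂ) : ℂ :=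
  ∑ n ∈ Finset.range s, η ^ (b * (n : ℤ) ^ 2 + d * (n : ℤ))

/-- `u` is a unit of the subring `S` of `ℂ`. -/
def IsUnitIn (S : Subring ℂ) (u : ℂ) : Prop := u ∈ S ∧ ∃ v ∈ S, u * v = 1

/-- `x` and `y` are associates in the subring `S` of `ℂ`: `x = u y` for a unit `u` of `S`. -/
def AssociatedIn (S : Subring ℂ) (x y : ℂ) : Prop := ∃ u, IsUnitIn S u ∧ x = u * y

/-!
Write `G = G(b,d,ξ)` and `H = G(-b,-d,ξ)`. Expanding the product and shifting one variable gives
`G * H = r * ∑ ξ ^ (b * t ^ 2 + d * t)`, the sum being over the `t` modulo `r` with `2 * t = 0`,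
which is easily evaluated. To compare `G ^ 2` with `G * H`, view `G ^ 4` as a sum over the
quaternions modulo `r`: by Lagrange's four-square theorem there is a quaternion of norm `-1`, and
multiplication by it negates the exponent up to completing the square, so `G ^ 4` and `H ^ 4` agree
up to a power of `ξ`. Hence `(G ^ 2) ^ k = (G * H) ^ k` for some `k > 0`, and since `ℤ[ξ]` is
integrally closed, `G ^ 2` and `G * H` are associates.
-/

open Quaternion IntermediateField

section FiniteRing

variable {R K : Type*} [CommRing R]

section Quaternion

/-- The quaternion `1 + i + j + k`; pairing with it sums the coordinates of a quaternion. -/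
@[simps]
def onesQuaternion (R : Type*) [CommRing R] : ℍ[R] := ⟨1, 1, 1, 1⟩

/-- The quadratic polynomial `t ^ 2 + e * t` summed over the four coordinates of a quaternion. -/
def quaternionForm (e : R) (x : ℍ[R]) : R :=
  normSq x + e * (x * star (onesQuaternion R)).re

lemma re_mul_mul_star_mul (q x y : ℍ[R]) :
    (q * x * star (q * y)).re = normSq q * (x * star y).re := by
  simp only [normSq_def', re_mul, imI_mul, imJ_mul, imK_mul, re_star, imI_star, imJ_star, imK_star]
  ring

/-- Left multiplication by a quaternion of norm `-1`, followed by a translation. -/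
def mulLeftAddEquiv (q c : ℍ[R]) (hq : normSq q = -1) : ℍ[R] ≃ ℍ[R] :=
  (Units.mulLeft
    { val := q
      inv := -star q
      val_inv := by rw [mul_neg, self_mul_star, hq, coe_neg, neg_neg, coe_one]
      inv_val := by rw [neg_mul, star_mul_self, hq, coe_neg, neg_neg, coe_one] }).trans
    (Equiv.addRight c)

-- Up to the translation that completes the square, `x ↦ q * x + e • c` is multiplication by `q`;
-- the condition on `c` says this without dividing by `2`.
lemma quaternionForm_mul_add_smul {q c : ℍ[R]} (hq : normSq q = -1)
    (hc : 2 * c = q * onesQuaternion R - onesQuaternion R) (e : R) (x : ℍ[R]) :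
    quaternionForm e (q * x + e • c) = quaternionForm e (e • c) - quaternionForm e x := by
  have hcross : 2 * (q * x * star c).re =
      -(x * star (onesQuaternion R)).re - (q * x * star (onesQuaternion R)).re := by
    have hpair := congrArg (fun y ↦ (q * x * star y).re) hc
    simp only [two_mul, star_add, star_sub, mul_add, mul_sub, re_add, re_sub, re_mul_mul_star_mul,
      hq] at hpair
    linear_combination hpair
  simp only [quaternionForm, normSq_add, map_mul, hq, add_mul, re_add, Quaternion.star_smul,
    mul_smul_comm, re_smul, smul_eq_mul]
  linear_combination e * hcross

-- Lagrange's theorem is applied to the odd number `2 * s - 1`, so that all coordinates of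
-- `q * (1 + i + j + k)` are odd.
lemma exists_quaternion_normSq_eq_neg_one (R : Type*) [CommRing R] (s : ℕ) [NeZero s] [CharP R s] :
    ∃ q c : ℍ[R], normSq q = -1 ∧ 2 * c = q * onesQuaternion R - onesQuaternion R := by
  obtain ⟨k, l, m, n, hsq⟩ := Nat.sum_four_squares (2 * s - 1)
  have hs := NeZero.pos s
  have hsq_succ : k ^ 2 + l ^ 2 + m ^ 2 + n ^ 2 + 1 = 2 * s := by lia
  obtain ⟨t, ht⟩ : Odd (k + l + m + n) := by
    have hodd : Odd (k ^ 2 + l ^ 2 + m ^ 2 + n ^ 2) := ⟨s - 1, by lia⟩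
    simpa [parity_simps, Nat.odd_add, Nat.odd_pow_iff, Nat.even_pow] using hodd
  have htR : (k + l + m + n : R) = 2 * t + 1 := mod_cast congrArg (Nat.cast (R := R)) ht
  have hsqR : (k ^ 2 + l ^ 2 + m ^ 2 + n ^ 2 + 1 : R) = 0 := by
    have hcast := congrArg (Nat.cast (R := R)) hsq_succ
    push_cast at hcast
    rw [hcast, CharP.cast_eq_zero R s, mul_zero]
  obtain ⟨q, hq_re, hq_imI, hq_imJ, hq_imK⟩ :
      ∃ q : ℍ[R], q.re = k ∧ q.imI = l ∧ q.imJ = m ∧ q.imK = n := ⟨⟨k, l, m, n⟩, rfl, rfl, rfl, rfl⟩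
  obtain ⟨c, hc_re, hc_imI, hc_imJ, hc_imK⟩ :
      ∃ c : ℍ[R], c.re = t - l - m - n ∧ c.imI = t - n ∧ c.imJ = t - l ∧ c.imK = t - m :=
    ⟨⟨t - l - m - n, t - n, t - l, t - m⟩, rfl, rfl, rfl, rfl⟩
  refine ⟨q, c, ?_, ?_⟩
  · rw [normSq_def', hq_re, hq_imI, hq_imJ, hq_imK]
    linear_combination hsqR
  · rw [two_mul]
    ext <;> simp [hq_re, hq_imI, hq_imJ, hq_imK, hc_re, hc_imI, hc_imJ, hc_imK] <;>
      linear_combination -htR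

end Quaternion

variable [Fintype R] [CommRing K]

/-- The quadratic Gauss sum of an additive character of a finite ring. -/
def quadGaussSum (ψ : AddChar R K) (b d : R) : K := ∑ x, ψ (b * x ^ 2 + d * x)

lemma quadGaussSum_mul_quadGaussSum_neg [DecidableEq R] [IsDomain K] {ψ : AddChar R K}
    (hψ : ψ.IsPrimitive) {b : R} (hb : IsUnit b) (d : R) :
    quadGaussSum ψ b d * quadGaussSum ψ (-b) (-d) =
      Fintype.card R * ∑ t with 2 * t = 0, ψ (b * t ^ 2 + d * t) := by
  have hshift (y : R) : ∑ x, ψ (b * x ^ 2 + d * x) * ψ (-b * y ^ 2 + -d * y) =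
      ∑ t, ψ (b * t ^ 2 + d * t) * ψ (y * (b * (2 * t))) := by
    rw [← Equiv.sum_comp (Equiv.addLeft y)]
    refine Finset.sum_congr rfl fun t _ ↦ ?_
    rw [← AddChar.map_add_eq_mul, ← AddChar.map_add_eq_mul, Equiv.coe_addLeft]
    ring_nf
  calc quadGaussSum ψ b d * quadGaussSum ψ (-b) (-d)
      = ∑ y, ∑ t, ψ (b * t ^ 2 + d * t) * ψ (y * (b * (2 * t))) := by
        rw [quadGaussSum, quadGaussSum, Finset.sum_mul_sum, Finset.sum_comm]
        exact Finset.sum_congr rfl fun y _ ↦ hshift y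
    _ = ∑ t, ψ (b * t ^ 2 + d * t) * if 2 * t = 0 then (Fintype.card R : K) else 0 := by
        rw [Finset.sum_comm]
        simp only [← Finset.mul_sum, AddChar.sum_mulShift _ hψ, hb.mul_right_eq_zero, Nat.cast_ite,
          Nat.cast_zero]
    _ = Fintype.card R * ∑ t with 2 * t = 0, ψ (b * t ^ 2 + d * t) := by
        simp only [mul_ite, mul_zero]
        rw [← Finset.sum_filter, ← Finset.sum_mul, mul_comm]

lemma quadGaussSum_pow_four [Fintype ℍ[R]] (ψ : AddChar R K) (b e : R) :
    quadGaussSum ψ b (b * e) ^ 4 = ∑ x : ℍ[R], ψ (b * quaternionForm e x) := by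
  rw [quadGaussSum, Fintype.sum_pow, ← Equiv.sum_comp (Quaternion.equivTuple R)]
  refine Finset.sum_congr rfl fun x _ ↦ ?_
  rw [Fin.prod_univ_four, ← AddChar.map_add_eq_mul, ← AddChar.map_add_eq_mul,
    ← AddChar.map_add_eq_mul]
  simp only [Quaternion.equivTuple_apply, Matrix.cons_val, quaternionForm, normSq_def', re_mul,
    re_star, imI_star, imJ_star, imK_star, re_onesQuaternion,
    imI_onesQuaternion, imJ_onesQuaternion, imK_onesQuaternion]
  ring_nf

lemma exists_quadGaussSum_pow_four_eq_mul (ψ : AddChar R K) {b : R} (hb : IsUnit b) (d : R) :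
    ∃ a, quadGaussSum ψ b d ^ 4 = ψ a * quadGaussSum ψ (-b) (-d) ^ 4 := by
  have : NeZero (ringChar R) := ⟨CharP.ringChar_ne_zero_of_finite R⟩
  obtain ⟨q, c, hq, hc⟩ := exists_quaternion_normSq_eq_neg_one R (ringChar R)
  obtain ⟨e, rfl⟩ := hb.dvd (a := d)
  have : Fintype ℍ[R] := Fintype.ofEquiv _ (Quaternion.equivTuple R).symm
  refine ⟨b * quaternionForm e (e • c), ?_⟩
  rw [← neg_mul, quadGaussSum_pow_four, quadGaussSum_pow_four, Finset.mul_sum,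
    ← Equiv.sum_comp (mulLeftAddEquiv q (e • c) hq)]
  refine Finset.sum_congr rfl fun x _ ↦ ?_
  have happly : mulLeftAddEquiv q (e • c) hq x = q * x + e • c := rfl
  rw [happly, quaternionForm_mul_add_smul hq hc, ← AddChar.map_add_eq_mul]
  ring_nf

lemma quadGaussSum_sq_pow_eq (s : ℕ) [CharP R s] (ψ : AddChar R K) {b : R} (hb : IsUnit b)
    (d : R) : (quadGaussSum ψ b d ^ 2) ^ (4 * s) =
      (quadGaussSum ψ b d * quadGaussSum ψ (-b) (-d)) ^ (4 * s) := by
  obtain ⟨a, ha⟩ := exists_quadGaussSum_pow_four_eq_mul ψ hb d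
  have hψa : ψ a ^ s = 1 := by
    rw [← AddChar.map_nsmul_eq_pow, nsmul_eq_mul, CharP.cast_eq_zero, zero_mul,
      AddChar.map_zero_eq_one]
  calc (quadGaussSum ψ b d ^ 2) ^ (4 * s)
      = (quadGaussSum ψ b d ^ 4 * quadGaussSum ψ b d ^ 4) ^ s := by ring
    _ = (quadGaussSum ψ b d ^ 4 * (ψ a * quadGaussSum ψ (-b) (-d) ^ 4)) ^ s := by
        nth_rewrite 2 [ha]; rfl
    _ = ψ a ^ s * (quadGaussSum ψ b d * quadGaussSum ψ (-b) (-d)) ^ (4 * s) := by ring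
    _ = (quadGaussSum ψ b d * quadGaussSum ψ (-b) (-d)) ^ (4 * s) := by rw [hψa, one_mul]

end FiniteRing

section Cyclotomic

variable {r : ℕ} [NeZero r]

lemma mem_closure_singleton_of_isIntegral {L : Type*} [Field L] [CharZero L] {ξ : L}
    (hξ : IsPrimitiveRoot ξ r) {y : L} (hy : y ∈ ℚ⟮ξ⟯) (hy_int : IsIntegral ℤ y) :
    y ∈ Subring.closure {ξ} := by
  have hcycl : IsCyclotomicExtension {r} ℚ ℚ⟮ξ⟯ := by
    change IsCyclotomicExtension {r} ℚ ℚ⟮ξ⟯.toSubalgebra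
    rw [adjoin_simple_toSubalgebra_of_isAlgebraic
      ((hξ.isIntegral (NeZero.pos r)).tower_top (A := ℚ)).isAlgebraic]
    exact hξ.adjoin_isCyclotomicExtension ℚ
  have hgen : IsPrimitiveRoot (AdjoinSimple.gen ℚ ξ) r :=
    IsPrimitiveRoot.coe_submonoidClass_iff.1 hξ
  have hclosure := IsCyclotomicExtension.Rat.isIntegralClosure_adjoin_singleton hgen
  have hy_int_adjoin : IsIntegral ℤ (⟨y, hy⟩ : ℚ⟮ξ⟯) :=
    (isIntegral_algHom_iff (ℚ⟮ξ⟯.val.restrictScalars ℤ) Subtype.val_injective).1 hy_int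
  obtain ⟨⟨z, hz⟩, hzy⟩ := hclosure.isIntegral_iff.1 hy_int_adjoin
  rw [Algebra.adjoin_int, mem_subalgebraOfSubring] at hz
  have hmap : ℚ⟮ξ⟯.val z ∈ (Subring.closure {AdjoinSimple.gen ℚ ξ}).map (ℚ⟮ξ⟯.val : ℚ⟮ξ⟯ →+* L) :=
    ⟨z, hz, rfl⟩
  rw [RingHom.map_closure, Set.image_singleton] at hmap
  rwa [show z = ⟨y, hy⟩ from hzy] at hmap

lemma associatedIn_of_pow_eq_pow {ξ : ℂ} (hξ : IsPrimitiveRoot ξ r) {x y : ℂ}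
    (hx : x ∈ Subring.closure {ξ}) (hy : y ∈ Subring.closure {ξ}) {k : ℕ} (hk : k ≠ 0)
    (hxy : x ^ k = y ^ k) : AssociatedIn (Subring.closure {ξ}) x y := by
  rcases eq_or_ne y 0 with rfl | hy0
  · rw [zero_pow hk] at hxy
    exact ⟨1, ⟨one_mem _, 1, one_mem _, one_mul 1⟩, by rw [eq_zero_of_pow_eq_zero hxy, mul_zero]⟩
  have hroot : (x / y) ^ k = 1 := by rw [div_pow, hxy, div_self (pow_ne_zero k hy0)]
  have hle : Subring.closure {ξ} ≤ ℚ⟮ξ⟯.toSubring :=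
    Subring.closure_le.2 (Set.singleton_subset_iff.2 (mem_adjoin_simple_self ℚ ξ))
  have hmem : x / y ∈ Subring.closure {ξ} :=
    mem_closure_singleton_of_isIntegral hξ (div_mem (hle hx) (hle hy))
      (IsIntegral.of_pow (Nat.pos_of_ne_zero hk) (hroot ▸ isIntegral_one))
  refine ⟨x / y, ⟨hmem, (x / y) ^ (k - 1), pow_mem hmem _, ?_⟩, (div_mul_cancel₀ x hy0).symm⟩
  rw [mul_pow_sub_one hk, hroot]

lemma pow_eq_neg_one_of_isPrimitiveRoot_two_mul {A : Type*} [CommRing A] [IsDomain A] {ξ : A}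
    {m : ℕ} (hm : m ≠ 0) (hξ : IsPrimitiveRoot ξ (2 * m)) : ξ ^ m = -1 :=
  (hξ.pow (by positivity) (mul_comm 2 m)).eq_neg_one_of_two_right

end Cyclotomic

section ZMod

lemma odd_of_isCoprime_of_even {a b : ℤ} (hab : IsCoprime a b) (ha : Even a) : Odd b :=
  Int.isCoprime_two_left.1 (hab.of_isCoprime_of_dvd_left ha.two_dvd)

lemma zmod_two_mul_eq_zero_iff {m : ℕ} {t : ZMod (2 * m)} : 2 * t = 0 ↔ t = 0 ∨ t = m := by
  obtain ⟨k, rfl⟩ := ZMod.intCast_surjective t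
  have hhalf : 2 * (k : ZMod (2 * m)) = 0 ↔ (m : ℤ) ∣ k := by
    rw [← mul_dvd_mul_iff_left (two_ne_zero (α := ℤ))]
    exact_mod_cast ZMod.intCast_zmod_eq_zero_iff_dvd (2 * k) (2 * m)
  have hm : (2 * m : ZMod (2 * m)) = 0 := mod_cast ZMod.natCast_self (2 * m)
  refine ⟨fun h ↦ ?_, ?_⟩
  · obtain ⟨j, rfl⟩ := hhalf.1 h
    push_cast
    obtain ⟨i, rfl⟩ | ⟨i, rfl⟩ := j.even_or_odd
    · exact .inl (by push_cast; linear_combination (i : ZMod (2 * m)) * hm)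
    · exact .inr (by push_cast; linear_combination (i : ZMod (2 * m)) * hm)
  · rintro (h | h)
    · rw [h, mul_zero]
    · rw [h, hm]

variable {r : ℕ} [NeZero r]

lemma sum_range_natCast_zmod {M : Type*} [AddCommMonoid M] (f : ZMod r → M) :
    ∑ n ∈ Finset.range r, f n = ∑ x, f x :=
  Finset.sum_bij' (fun n _ ↦ (n : ZMod r)) (fun x _ ↦ x.val) (by simp)
    (fun x _ ↦ Finset.mem_range.2 x.val_lt)
    (fun _ hn ↦ ZMod.val_cast_of_lt (Finset.mem_range.1 hn)) (by simp) (by simp)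

lemma zmodChar_intCast {F : Type*} [Field F] {ξ : F} (hξ : ξ ^ r = 1) (k : ℤ) :
    AddChar.zmodChar r hξ k = ξ ^ k := by
  have hone : AddChar.zmodChar r hξ 1 = ξ := by simpa using AddChar.zmodChar_apply' hξ 1
  rw [← zsmul_one, AddChar.map_zsmul_eq_zpow, hone]

lemma zmodChar_quadratic_half {F : Type*} [Field F] {m : ℕ} [NeZero (2 * m)] {ξ : F}
    (hξ : IsPrimitiveRoot ξ (2 * m)) {b : ℤ} (hb : Odd b) (d : ℤ) :
    AddChar.zmodChar (2 * m) hξ.pow_eq_one (b * m ^ 2 + d * m) = (-1) ^ (m + d) := by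
  have hcast : (b * m ^ 2 + d * m : ZMod (2 * m)) = (m * (b * m + d) : ℤ) := by
    push_cast
    ring
  have hm : m ≠ 0 := right_ne_zero_of_mul (NeZero.ne (2 * m))
  have hneg : (-1 : F) ≠ 0 := neg_ne_zero.2 one_ne_zero
  rw [hcast, zmodChar_intCast, zpow_mul, zpow_natCast,
    pow_eq_neg_one_of_isPrimitiveRoot_two_mul hm hξ, zpow_add₀ hneg, zpow_mul, hb.neg_one_zpow,
    zpow_add₀ hneg]

lemma gaussSum_eq_quadGaussSum {ξ : ℂ} (hξ : ξ ^ r = 1) (b d : ℤ) :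
    GaussSum r b d ξ = quadGaussSum (AddChar.zmodChar r hξ) b d := by
  rw [GaussSum, quadGaussSum, ← sum_range_natCast_zmod]
  refine Finset.sum_congr rfl fun n _ ↦ ?_
  rw [← zmodChar_intCast hξ]
  push_cast
  rfl

lemma quadGaussSum_zmodChar_mem_closure {A : Type*} [CommRing A] {ξ : A} (hξ : ξ ^ r = 1)
    (b d : ZMod r) : quadGaussSum (AddChar.zmodChar r hξ) b d ∈ Subring.closure {ξ} :=
  sum_mem fun _ _ ↦ pow_mem (Subring.subset_closure (Set.mem_singleton ξ)) _

variable {ξ : ℂ} {b : ℤ}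

lemma gaussSum_sq_associatedIn (hξ : IsPrimitiveRoot ξ r) (hb : IsCoprime (r : ℤ) b) (d : ℤ) :
    AssociatedIn (Subring.closure {ξ}) (GaussSum r b d ξ ^ 2)
      (GaussSum r b d ξ * GaussSum r (-b) (-d) ξ) := by
  simp only [gaussSum_eq_quadGaussSum hξ.pow_eq_one, Int.cast_neg]
  have hmem := quadGaussSum_zmodChar_mem_closure hξ.pow_eq_one
  exact associatedIn_of_pow_eq_pow hξ (pow_mem (hmem b d) 2) (mul_mem (hmem b d) (hmem _ _))
    (mul_ne_zero four_ne_zero (NeZero.ne r))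
    (quadGaussSum_sq_pow_eq r _ ((ZMod.coe_int_isUnit_iff_isCoprime b r).2 hb) _)

lemma gaussSum_mul_gaussSum_neg (hξ : IsPrimitiveRoot ξ r) (hb : IsCoprime (r : ℤ) b) (d : ℤ) :
    GaussSum r b d ξ * GaussSum r (-b) (-d) ξ =
      r * ∑ t : ZMod r with 2 * t = 0,
        AddChar.zmodChar r hξ.pow_eq_one (b * t ^ 2 + d * t) := by
  simp only [gaussSum_eq_quadGaussSum hξ.pow_eq_one, Int.cast_neg]
  rw [quadGaussSum_mul_quadGaussSum_neg (AddChar.zmodChar_primitive_of_primitive_root r hξ)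
    ((ZMod.coe_int_isUnit_iff_isCoprime b r).2 hb), ZMod.card]

lemma gaussSum_mul_gaussSum_neg_of_odd (hr : Odd r) (hξ : IsPrimitiveRoot ξ r)
    (hb : IsCoprime (r : ℤ) b) (d : ℤ) :
    GaussSum r b d ξ * GaussSum r (-b) (-d) ξ = r := by
  simp [gaussSum_mul_gaussSum_neg hξ hb, two_mul, ZMod.add_self_eq_zero_iff_eq_zero hr,
    Finset.filter_eq']

lemma gaussSum_mul_gaussSum_neg_of_even (hr : Even r) (hξ : IsPrimitiveRoot ξ r)
    (hb : IsCoprime (r : ℤ) b) (d : ℤ) :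
    GaussSum r b d ξ * GaussSum r (-b) (-d) ξ = r * (1 + (-1) ^ ((r / 2 : ℕ) + d)) := by
  have hb_odd : Odd b := odd_of_isCoprime_of_even hb (by exact_mod_cast hr)
  obtain ⟨m, rfl⟩ := hr.two_dvd
  have hm : m ≠ 0 := right_ne_zero_of_mul (NeZero.ne (2 * m))
  have htorsion : ({t | 2 * t = 0} : Finset (ZMod (2 * m))) = {0, (m : ZMod (2 * m))} := by
    ext t
    simp [zmod_two_mul_eq_zero_iff]
  have hne : (0 : ZMod (2 * m)) ≠ m := by
    rw [ne_comm, Ne, ZMod.natCast_eq_zero_iff]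
    exact Nat.not_dvd_of_pos_of_lt (Nat.pos_of_ne_zero hm) (by lia)
  rw [gaussSum_mul_gaussSum_neg hξ hb, htorsion, Finset.sum_pair hne,
    zmodChar_quadratic_half hξ hb_odd, Nat.mul_div_cancel_left m two_pos]
  simp

end ZMod

theorem stmt_13_general {r : ℕ} [NeZero r] {ξ : ℂ} (hξ : IsPrimitiveRoot ξ r)
    {b : ℤ} (hb : Int.gcd b r = 1) (d : ℤ) :
    (Odd r → AssociatedIn (Subring.closure {ξ}) (GaussSum r b d ξ ^ 2) r) ∧
    (Even r → Odd ((r / 2 : ℕ) + d) → GaussSum r b d ξ ^ 2 = 0) ∧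
    (Even r → Even ((r / 2 : ℕ) + d) →
      AssociatedIn (Subring.closure {ξ}) (GaussSum r b d ξ ^ 2) (2 * r : ℕ)) := by
  have hcop : IsCoprime (r : ℤ) b := (Int.isCoprime_iff_gcd_eq_one.2 hb).symm
  have hassoc := gaussSum_sq_associatedIn hξ hcop d
  refine ⟨fun hr ↦ ?_, fun hr hodd ↦ ?_, fun hr heven ↦ ?_⟩
  · rwa [gaussSum_mul_gaussSum_neg_of_odd hr hξ hcop] at hassoc
  · rw [gaussSum_mul_gaussSum_neg_of_even hr hξ hcop, hodd.neg_one_zpow, add_neg_cancel,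
      mul_zero] at hassoc
    obtain ⟨u, -, hu⟩ := hassoc
    rw [hu, mul_zero]
  · rw [gaussSum_mul_gaussSum_neg_of_even hr hξ hcop, heven.neg_one_zpow, one_add_one_eq_two,
      mul_comm] at hassoc
    exact_mod_cast hassoc

/-- Let `ξ` be a primitive `r`-th root of unity and `b` coprime to `r`. Then `G(b,0,ξ)²` is
associated in `ℤ[ξ]` to `r` if `r` is odd, equals `0` if `r ≡ 2 (mod 4)`, and is associated
to `2r` if `r ≡ 0 (mod 4)`; furthermore if `r ≡ 2 (mod 4)` then `G(b,b,ξ)²` is associated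
to `2r`. -/
theorem stmt_13 (r : ℕ) (hr : 2 ≤ r) (ξ : ℂ) (hξ : IsPrimitiveRoot ξ r)
    (b : ℤ) (hb : Int.gcd b r = 1) :
    (Odd r → AssociatedIn (Subring.closure {ξ}) (GaussSum r b 0 ξ ^ 2) (r : ℂ)) ∧
    (r % 4 = 2 → GaussSum r b 0 ξ ^ 2 = 0) ∧
    (r % 4 = 0 → AssociatedIn (Subring.closure {ξ}) (GaussSum r b 0 ξ ^ 2) ((2 * r : ℕ) : ℂ)) ∧
    (r % 4 = 2 → AssociatedIn (Subring.closure {ξ}) (GaussSum r b b ξ ^ 2) ((2 * r : ℕ) : ℂ)) := by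
  have : NeZero r := ⟨by lia⟩
  have hmain := stmt_13_general hξ hb
  have hb_odd (h : r % 4 = 2) : Odd b :=
    odd_of_isCoprime_of_even (Int.isCoprime_iff_gcd_eq_one.2 hb).symm ⟨r / 2, by lia⟩
  exact ⟨(hmain 0).1,
    fun h ↦ (hmain 0).2.1 ⟨r / 2, by lia⟩ ⟨r / 4, by lia⟩,
    fun h ↦ (hmain 0).2.2 ⟨r / 2, by lia⟩ ⟨r / 4, by lia⟩,
    fun h ↦ (hmain b).2.2 ⟨r / 2, by lia⟩ (Odd.add_odd ⟨r / 4, by lia⟩ (hb_odd h))⟩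
end
end
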